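/- Let n ≥ 7 and 1 < k < n/2 be integers, let d be the largest integer such that 1 + kd ≤ n, and suppose d divides k and d < k. Then the set {1, 1+(k-1)(d-1), 1+(k-1)d} is a minimal non-face of the van der Waerden complex vdW(n,k): it is not a face of vdW(n,k), but every proper subset of it is a face. -/

import Mathlib

/-- `F` is a face of the van der Waerden complex `vdW(n,k)`: `F` is contained in a
full arithmetic progression `{a, a+j, ..., a+kj}` with `a ≥ 1`, `j ≥ 1`, `a + kj ≤ n`. -/
def vdwFace (n k : ℕ) (F : Finset ℕ) : Prop :=
  ∃ a j : ℕ, 1 ≤ a ∧ 1 ≤ j ∧ a + k * j ≤ n ∧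
    F ⊆ (Finset.range (k + 1)).image (fun i => a + i * j)

/-- A facet of `vdW(n,k)` is a face that is maximal under inclusion. -/
def vdwFacet (n k : ℕ) (F : Finset ℕ) : Prop :=
  vdwFace n k F ∧ ∀ G : Finset ℕ, vdwFace n k G → F ⊆ G → F = G

/-- `S` is a minimal non-face of `vdW(n,k)`: a subset of the vertex set `{1,...,n}`
that is not a face, but all of whose proper subsets are faces. -/
def vdwMinNonFace (n k : ℕ) (S : Finset ℕ) : Prop :=
  S ⊆ Finset.Icc 1 n ∧ ¬ vdwFace n k S ∧ ∀ T : Finset ℕ, T ⊂ S → vdwFace n k T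

/-- Two terms of a progression `a, a + j, …, a + k * j` inside `{1, …, n}` span a face. -/
theorem vdwFace_of_subset_pair {n k x y a j i i' : ℕ} {T : Finset ℕ} (ha : 1 ≤ a) (hj : 1 ≤ j)
    (hn : a + k * j ≤ n) (hi : i ≤ k) (hi' : i' ≤ k) (hx : x = a + i * j) (hy : y = a + i' * j)
    (hT : ∀ z ∈ T, z = x ∨ z = y) : vdwFace n k T := by
  refine ⟨a, j, ha, hj, hn, fun z hz => ?_⟩
  rw [Finset.mem_image]
  rcases hT z hz with rfl | rfl
  · exact ⟨i, by simpa [Nat.lt_succ_iff] using hi, hx.symm⟩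
  · exact ⟨i', by simpa [Nat.lt_succ_iff] using hi', hy.symm⟩

/-- The common difference of a progression with `k + 1` terms divides the difference of any two of
its terms, and `k` times the common difference bounds it. -/
theorem vdwFace.exists_step {n k : ℕ} {F : Finset ℕ} (h : vdwFace n k F) :
    ∃ j : ℕ, 1 + k * j ≤ n ∧
      ∀ x ∈ F, ∀ m : ℕ, x + m ∈ F → j ∣ m ∧ m ≤ k * j := by
  obtain ⟨a, j, ha, -, hn, hF⟩ := h
  refine ⟨j, by omega, fun x hx m hm => ?_⟩
  obtain ⟨p, -, rfl⟩ := Finset.mem_image.1 (hF hx)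
  obtain ⟨q, hq, hqm⟩ := Finset.mem_image.1 (hF hm)
  have hq' : q * j ≤ k * j := Nat.mul_le_mul_right j (Nat.lt_succ_iff.1 (Finset.mem_range.1 hq))
  have hqm' : q * j = p * j + m := by omega
  refine ⟨?_, by omega⟩
  exact (Nat.dvd_add_right (Dvd.intro_left p rfl)).1 (hqm' ▸ Dvd.intro_left q rfl)

/-- For `n ≥ 7`, `1 < k < n/2`, `d` the largest integer with `1 + kd ≤ n`, `d ∣ k`
and `d < k`, the set `{1, 1+(k-1)(d-1), 1+(k-1)d}` is a minimal non-face of `vdW(n,k)`. -/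
theorem vdW_minimal_nonface_dvd_lt (n k d : ℕ) (hn : 7 ≤ n) (hk : 1 < k) (hkn : 2 * k < n)
    (hd : 1 + k * d ≤ n ∧ ∀ e : ℕ, 1 + k * e ≤ n → e ≤ d) (hdvd : d ∣ k) (hdk : d < k) :
    vdwMinNonFace n k {1, 1 + (k - 1) * (d - 1), 1 + (k - 1) * d} := by
  obtain ⟨hd1, hd2⟩ := hd
  have h2d : 2 ≤ d := hd2 2 (by omega)
  obtain ⟨k, rfl⟩ : ∃ l, k = l + 1 := ⟨k - 1, by omega⟩
  obtain ⟨d, rfl⟩ : ∃ e, d = e + 1 := ⟨d - 1, by omega⟩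
  simp only [Nat.add_sub_cancel]
  have hkd : k * (d + 1) = k * d + k := by ring
  have hkd' : (k + 1) * (d + 1) = k * d + k + d + 1 := by ring
  have hkd'' : (k + 1) * d = k * d + d := by ring
  refine ⟨fun x hx => ?_, fun hF => ?_, fun T hT => ?_⟩
  · simp only [Finset.mem_insert, Finset.mem_singleton] at hx
    rw [Finset.mem_Icc]
    omega
  · obtain ⟨j, hj, hstep⟩ := hF.exists_step
    have hjd := hd2 j hj
    have hle := (hstep 1 (by simp) (k * (d + 1)) (by simp)).2
    have hdvdk := (hstep (1 + k * d) (by simp) k (by simp [hkd, add_assoc])).1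
    obtain rfl : j = d + 1 := by
      by_contra hne
      have : (k + 1) * j ≤ (k + 1) * d := Nat.mul_le_mul_left _ (by omega)
      omega
    have := Nat.dvd_one.1 ((Nat.dvd_add_right hdvdk).1 hdvd)
    omega
  · obtain ⟨x, hx, hxT⟩ := Finset.exists_of_ssubset hT
    have hmem : ∀ z ∈ T, z ≠ x ∧ (z = 1 ∨ z = 1 + k * d ∨ z = 1 + k * (d + 1)) :=
      fun z hz => ⟨fun h => hxT (h ▸ hz), by simpa using hT.subset hz⟩
    simp only [Finset.mem_insert, Finset.mem_singleton] at hx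
    rcases hx with rfl | rfl | rfl
    · exact vdwFace_of_subset_pair (x := 1 + k * d) (y := 1 + k * (d + 1)) (a := 1 + k * d)
        (j := 1) (i := 0) (i' := k) (by omega) le_rfl (by omega) (by omega) (by omega)
        (by omega) (by omega) fun z hz => by have := hmem z hz; tauto
    · exact vdwFace_of_subset_pair (x := 1) (y := 1 + k * (d + 1)) (a := 1)
        (j := d + 1) (i := 0) (i' := k) le_rfl (by omega) hd1 (by omega) (by omega)
        (by omega) rfl fun z hz => by have := hmem z hz; tauto
    · exact vdwFace_of_subset_pair (x := 1) (y := 1 + k * d) (a := 1)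
        (j := d) (i := 0) (i' := k) le_rfl (by omega) (by omega) (by omega) (by omega)
        (by omega) rfl fun z hz => by have := hmem z hz; tauto
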